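/- Let S = (L, ≺) be an addable abstract numeration system, let x be an S-automatic infinite word over a finite alphabet C that has sublinear factor complexity, and let X = O(x) be the subshift generated by x. Then the winning shift W(X) ⊆ ℕ^ℕ is S-codable, i.e., W(X) is weakly S-codable and has finite coding dimension. -/

import Mathlib

open scoped BigOperators

/-- A language is regular if it is accepted by a DFA with finitely many states. -/
def IsRegularLang {α : Type*} (L : Set (List α)) : Prop :=
  ∃ (σ : Type) (_ : Fintype σ) (M : DFA α σ), ∀ w : List α, w ∈ M.accepts ↔ w ∈ L

/-- Pad a word over `A` to length `M` by prepending the padding symbol `none`. -/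
def padOne {A : Type*} (M : ℕ) (w : List A) : List (Option A) :=
  List.replicate (M - w.length) none ++ w.map some

/-- The padded form of a `d`-tuple of words over `A`, as a word over `(A ∪ {#})^d`. -/
def padTuple {A : Type*} {d : ℕ} (ws : Fin d → List A) : List (Fin d → Option A) :=
  List.ofFn fun j : Fin (Finset.univ.sup fun i : Fin d => (ws i).length) =>
    fun i : Fin d =>
      (padOne (Finset.univ.sup fun i : Fin d => (ws i).length) (ws i)).getD j.val none

/-- An abstract numeration system over the alphabet `A`, encoded by the order isomorphism
`rep : ℕ → L ⊆ A*` enumerating its (infinite) language in increasing order. -/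
structure ANS (A : Type*) where
  rep : ℕ → List A
  inj : Function.Injective rep

/-- A set `Y ⊆ ℕ^d` is `S`-recognizable if the padded representations of its members form
a regular language. -/
def ANS.Recognizable {A : Type*} (S : ANS A) {d : ℕ} (Y : Set (Fin d → ℕ)) : Prop :=
  IsRegularLang { w : List (Fin d → Option A) | ∃ t ∈ Y, w = padTuple fun i => S.rep (t i) }

/-- An ANS is addable if the graph of addition is `S`-recognizable. -/
def ANS.Addable {A : Type*} (S : ANS A) : Prop :=
  S.Recognizable { t : Fin 3 → ℕ | t 0 + t 1 = t 2 }

/-- An ANS is comparable if the relation `≤` is `S`-recognizable. -/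
def ANS.Comparable {A : Type*} (S : ANS A) : Prop :=
  S.Recognizable { t : Fin 2 → ℕ | t 0 ≤ t 1 }

/-- An ANS is regular if `ℕ` (i.e. its language) is `S`-recognizable. -/
def ANS.IsRegularANS {A : Type*} (S : ANS A) : Prop :=
  S.Recognizable (Set.univ : Set (Fin 1 → ℕ))

/-- The unary ANS, with language `0*` ordered by length. -/
def unaryANS : ANS Unit where
  rep := fun n => List.replicate n ()
  inj := fun m n h => by simpa using congrArg List.length h

/-- `x` is `S`-automatic: some DFAO outputs `x n` on input `rep_S n`. -/
def SAutomatic {A C : Type*} (S : ANS A) (x : ℕ → C) : Prop :=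
  ∃ (Q : Type) (_ : Fintype Q) (M : DFA A Q) (τ : Q → C),
    ∀ n : ℕ, τ (M.eval (S.rep n)) = x n

/-- The shift map on one-sided infinite words. -/
def shiftMap {C : Type*} (x : ℕ → C) : ℕ → C := fun n => x (n + 1)

/-- The orbit closure of `x` (closure in the product topology over the discrete alphabet):
`y` belongs to it iff every finite prefix of `y` occurs in `x`. -/
def orbitClosure {C : Type*} (x : ℕ → C) : Set (ℕ → C) :=
  { y | ∀ n : ℕ, ∃ m : ℕ, ∀ i < n, y i = x (m + i) }

/-- A subshift: a shift-invariant subset of `C^ℕ` that is closed in the product topology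
over the discrete alphabet (expressed combinatorially). -/
def IsSubshift {C : Type*} (X : Set (ℕ → C)) : Prop :=
  (∀ x ∈ X, shiftMap x ∈ X) ∧
  ∀ y : ℕ → C, (∀ n : ℕ, ∃ x ∈ X, ∀ i < n, y i = x i) → y ∈ X

/-- The language of a set of infinite words: all finite factors of its elements. -/
def LangOf {C : Type*} (X : Set (ℕ → C)) : Set (List C) :=
  { w | ∃ x ∈ X, ∃ p : ℕ, w = List.ofFn fun i : Fin w.length => x (p + i) }

/-- A word is right special in (the language of) `X` if it has two distinct one-letter
extensions in the language of `X`. -/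
def RightSpecial {C : Type*} (X : Set (ℕ → C)) (w : List C) : Prop :=
  ∃ a b : C, a ≠ b ∧ w ++ [a] ∈ LangOf X ∧ w ++ [b] ∈ LangOf X

/-- The factor complexity of `x`: the number of distinct factors of length `n`. -/
noncomputable def factorComplexity {C : Type*} (x : ℕ → C) (n : ℕ) : ℕ :=
  Set.ncard { w : List C | ∃ p : ℕ, w = List.ofFn fun i : Fin n => x (p + i) }

/-- `T` is a strategy tree witnessing `α ∈ W(X)`: a prefix-closed set of finite words
containing the empty word, in which every word of length `i` has exactly `α i + 1`
one-letter extensions, and all whose infinite branches lie in `X`. -/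
def IsStrategyTree {C : Type*} (X : Set (ℕ → C)) (α : ℕ → ℕ) (T : Set (List C)) : Prop :=
  ([] : List C) ∈ T ∧
  (∀ u v : List C, u ++ v ∈ T → u ∈ T) ∧
  (∀ w ∈ T, Set.ncard { c : C | w ++ [c] ∈ T } = α w.length + 1) ∧
  (∀ y : ℕ → C, (∀ n : ℕ, (List.ofFn fun i : Fin n => y i) ∈ T) → y ∈ X)

/-- The winning shift of `X ⊆ C^ℕ`, a subset of `ℕ^ℕ`. -/
def winningShift {C : Type*} (X : Set (ℕ → C)) : Set (ℕ → ℕ) :=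
  { α | ∃ T : Set (List C), IsStrategyTree X α T }

/-- Membership in the winning set of a set `X` of finite words, defined recursively:
`ε ∈ W(X)` iff `ε ∈ X`, and `a :: α ∈ W(X)` iff there is a set of `a + 1` letters `c`
such that `α` is in the winning set of the left quotient of `X` by `c`. -/
def winningSetMem {C : Type*} : List ℕ → Set (List C) → Prop
  | [], X => [] ∈ X
  | a :: α, X => ∃ S : Finset C, S.card = a + 1 ∧ ∀ c ∈ S, winningSetMem α { w | c :: w ∈ X }

/-- `Σ y = m`: the sum of the letters of `y ∈ ℕ^ℕ` is finite and equals `m`. -/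
def sumEq (y : ℕ → ℕ) (m : ℕ) : Prop :=
  (Function.support y).Finite ∧ ∑ᶠ i, y i = m

/-- `Y ⊆ ℕ^ℕ` has finite coding dimension: the sums `Σ y`, `y ∈ Y`, are uniformly bounded. -/
def FiniteCodingDim (Y : Set (ℕ → ℕ)) : Prop :=
  ∃ d : ℕ, ∀ y ∈ Y, ∀ F : Finset ℕ, ∑ i ∈ F, y i ≤ d

/-- The set `{ν(y) : y ∈ Y, Σy = k} ⊆ ℕᵏ`: nondecreasing `k`-tuples `t` such that the word
whose letter at `j` is the number of occurrences of `j` in `t` belongs to `Y`. -/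
def nuSet (Y : Set (ℕ → ℕ)) (k : ℕ) : Set (Fin k → ℕ) :=
  { t | Monotone t ∧ (fun j => Set.ncard { i : Fin k | t i = j }) ∈ Y }

/-- `Y ⊆ ℕ^ℕ` is weakly `S`-codable if `{ν(y) : y ∈ Y, Σy = k}` is `S`-recognizable for
every `k`. -/
def WeaklySCodable {A : Type*} (S : ANS A) (Y : Set (ℕ → ℕ)) : Prop :=
  ∀ k : ℕ, S.Recognizable (nuSet Y k)

/-- `Y ⊆ ℕ^ℕ` is `S`-codable if it is weakly `S`-codable and has finite coding dimension. -/
def SCodable {A : Type*} (S : ANS A) (Y : Set (ℕ → ℕ)) : Prop :=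
  WeaklySCodable S Y ∧ FiniteCodingDim Y

/-- `P_{111}(Y)`: strictly increasing triples `(a, b, c)` such that the word with letter `1`
exactly at positions `a`, `b`, `c` and `0` elsewhere belongs to `Y`. -/
def P111 (Y : Set (ℕ → ℕ)) : Set (Fin 3 → ℕ) :=
  { t | t 0 < t 1 ∧ t 1 < t 2 ∧
        (fun j => if j = t 0 ∨ j = t 1 ∨ j = t 2 then 1 else 0) ∈ Y }

/-- `P_v(Y)` for a finite word `v` over `ℕ`: strictly increasing tuples `n` such that the
word with letter `v i` at position `n i` and `0` elsewhere belongs to `Y`. -/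
def PvSet (v : List ℕ) (Y : Set (ℕ → ℕ)) : Set (Fin v.length → ℕ) :=
  { n | StrictMono n ∧
        (fun j => ∑ i : Fin v.length, if n i = j then v.get i else 0) ∈ Y }

/-- `X` is sofic: the set of label sequences of right-infinite paths in a finite
edge-labeled graph. -/
def IsSofic {C : Type*} (X : Set (ℕ → C)) : Prop :=
  ∃ (V : Type) (_ : Fintype V) (E : Set (V × C × V)),
    X = { x | ∃ p : ℕ → V, ∀ n : ℕ, (p n, x n, p (n + 1)) ∈ E }

/-- The factor `x[a..b-1]` of an infinite word. -/
def segmentOf {C : Type*} (x : ℕ → C) (a b : ℕ) : List C :=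
  List.ofFn fun i : Fin (b - a) => x (a + i)

/-- `U · V^ω`: infinite words that decompose as a word of `U` followed by infinitely many
nonempty words of `V`. -/
def omegaIter {C : Type*} (U V : Set (List C)) : Set (ℕ → C) :=
  { x | ∃ k : ℕ → ℕ, StrictMono k ∧ segmentOf x 0 (k 0) ∈ U ∧
        ∀ i : ℕ, segmentOf x (k i) (k (i + 1)) ∈ V }

/-- `X ⊆ C^ℕ` is ω-regular: a finite union of sets `U · V^ω` with `U`, `V` regular. -/
def IsOmegaRegular {C : Type*} (X : Set (ℕ → C)) : Prop :=
  ∃ (n : ℕ) (U V : Fin n → Set (List C)),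
    (∀ i, IsRegularLang (U i) ∧ IsRegularLang (V i)) ∧
    X = ⋃ i, omegaIter (U i) (V i)

/-- The words `p₁ = a`, `p_{k+1} = p_k bᵏ p_k` (with `a = false`, `b = true`). -/
def pWord : ℕ → List Bool
  | 0 => []
  | 1 => [false]
  | (k + 2) => pWord (k + 1) ++ List.replicate (k + 1) true ++ pWord (k + 1)

/-- Combinatorial continuity of `φ` on `Y` for product topologies over discrete alphabets:
every finite prefix of `φ y` is determined by a finite prefix of `y`. -/
def ContOn {B C : Type*} (φ : (ℕ → B) → (ℕ → C)) (Y : Set (ℕ → B)) : Prop :=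
  ∀ y ∈ Y, ∀ n : ℕ, ∃ m : ℕ, ∀ y' ∈ Y, (∀ i < m, y' i = y i) → ∀ i < n, φ y' i = φ y i

/-!
For the recognizability of `ν(W(X))` in weight `k`, a strategy tree for `α` with `Σα = k` has at
most `2 ^ k` nodes at each depth, so up to any depth `N` it consists of the factors of `x` read at
`2 ^ k` positions. By compactness, `α ∈ W(X)` iff for every `N` there are `2 ^ k` positions whose
factors branch as `α` prescribes up to depth `N`. This is a first-order condition on `ν(α)` in
terms of addition and the letters of `x`, and over an addable numeration system such conditions
define recognizable sets.

For the finite coding dimension, Cassaigne's theorem bounds the number `R` of right special factors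
of each length. If `α n ≠ 0`, all nodes of a strategy tree at depth `n` are right special, and
their number doubles at least at each earlier nonzero letter of `α`; so `α` has at most `R + 1`
nonzero letters, each at most the size of the alphabet.

Cassaigne's theorem follows by looking at right special words with a common suffix `v` of length
`m`. All periods of `v` that are at most `m / 2` predict the same letter after `v`, so each of these
words has a continuation that contradicts all of them. Sliding a window over that continuation then
produces pairwise distinct factors, and these are too many unless the number of words is bounded.
-/

/-! ### Regular languages -/

section RegularLanguages

open Language

variable {α β ι : Type*}

theorem isRegularLang_iff_isRegular {L : Language α} : IsRegularLang L ↔ L.IsRegular :=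
  exists_congr fun _ => exists_congr fun _ => exists_congr fun _ => Set.ext_iff.symm

theorem isRegular_congr {K L : Language α} (hK : K.IsRegular) (h : ∀ w, w ∈ L ↔ w ∈ K) :
    L.IsRegular :=
  Set.ext h ▸ hK

theorem isRegular_top : (⊤ : Language α).IsRegular :=
  .of_finite_range_leftQuotient <| (Set.finite_singleton ⊤).subset <|
    Set.range_subset_iff.2 fun _ => rfl

theorem isRegular_preimage {L : Language α} (hL : L.IsRegular) {φ : List β → List α}
    (hφ : ∀ u v, φ (u ++ v) = φ u ++ φ v) :
    IsRegular ({w | φ w ∈ L} : Language β) := by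
  refine .of_finite_range_leftQuotient <|
    (hL.finite_range_leftQuotient.image fun K => {w | φ w ∈ K}).subset ?_
  rintro _ ⟨u, rfl⟩
  refine ⟨L.leftQuotient (φ u), ⟨φ u, rfl⟩, Set.ext fun v => ?_⟩
  change φ u ++ φ v ∈ L ↔ φ (u ++ v) ∈ L
  rw [hφ]

theorem isRegular_biInter {L : ι → Language α} (hL : ∀ i, (L i).IsRegular) (s : Finset ι) :
    IsRegular ({w | ∀ i ∈ s, w ∈ L i} : Language α) := by
  classical
  induction s using Finset.induction_on with
  | empty => simpa using! isRegular_top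
  | insert i s _ ih =>
    exact isRegular_congr ((hL i).inf ih) fun w => Finset.forall_mem_insert _ _ _

theorem isRegular_forall [Finite ι] {L : ι → Language α} (hL : ∀ i, (L i).IsRegular) :
    IsRegular ({w | ∀ i, w ∈ L i} : Language α) := by
  have := Fintype.ofFinite ι
  simpa using isRegular_biInter hL Finset.univ

theorem isRegular_map_of_leading_replicate {L : Language α} (hL : L.IsRegular) (g : α → β)
    (z : β) :
    IsRegular ({w | ∃ m, ∃ v ∈ L, v.map g = List.replicate m z ++ w} : Language β) := by
  let image (𝒦 : Set (Language α)) : Language β := {w | ∃ K ∈ 𝒦, ∃ v ∈ K, v.map g = w}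
  refine .of_finite_range_leftQuotient <|
    (hL.finite_range_leftQuotient.finite_subsets.image image).subset ?_
  rintro _ ⟨u, rfl⟩
  refine ⟨{K | ∃ m v, v.map g = List.replicate m z ++ u ∧ L.leftQuotient v = K}, ?_,
    Set.ext fun w => ⟨?_, ?_⟩⟩
  · rintro _ ⟨-, v, -, rfl⟩
    exact ⟨v, rfl⟩
  · rintro ⟨_, ⟨m, v, hv, rfl⟩, v', hv', rfl⟩
    exact ⟨m, v ++ v', hv', by simp [hv]⟩
  · rintro ⟨m, v, hv, he⟩
    rw [← List.append_assoc, List.map_eq_append_iff] at he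
    obtain ⟨v₁, v₂, rfl, hv₁, hv₂⟩ := he
    exact ⟨_, ⟨m, v₁, hv₁, rfl⟩, v₂, hv, hv₂⟩

theorem isRegular_dropWhile_mem {L : Language α} (hL : L.IsRegular) (p : α → Bool) :
    IsRegular ({w | w.dropWhile p ∈ L} : Language α) := by
  refine .of_finite_range_leftQuotient <|
    (hL.finite_range_leftQuotient.insert {w | w.dropWhile p ∈ L}).subset ?_
  rintro _ ⟨u, rfl⟩
  by_cases hu : (u.dropWhile p).isEmpty
  · refine .inl <| Set.ext fun v => ?_
    change (u ++ v).dropWhile p ∈ L ↔ v.dropWhile p ∈ L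
    rw [List.dropWhile_append, if_pos hu]
  · refine .inr ⟨u.dropWhile p, Set.ext fun v => ?_⟩
    change u.dropWhile p ++ v ∈ L ↔ (u ++ v).dropWhile p ∈ L
    rw [List.dropWhile_append, if_neg hu]

theorem isRegular_forall_ne_cons (z : α) :
    IsRegular ({w | ∀ v, w ≠ z :: v} : Language α) := by
  refine .of_finite_range_leftQuotient <|
    (Set.toFinite {{w | ∀ v, w ≠ z :: v}, ⊤, ⊥}).subset ?_
  rintro _ ⟨_ | ⟨a, u⟩, rfl⟩
  · exact .inl rfl
  · by_cases ha : a = z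
    · exact .inr <| .inr <| Set.ext fun v => iff_of_false (fun h => h (u ++ v) (by simp [ha])) id
    · refine .inr <| .inl <| Set.ext fun v => iff_of_true (fun w hw => ha ?_) trivial
      exact (List.cons.inj hw).1

end RegularLanguages

/-! ### Padded encodings of tuples -/

section Encodings

variable {A ι κ : Type*} {r r' : List A} {T : List (Option A)}

/-- The word `T` over `A ∪ {#}`, with `none` for the padding symbol `#`, consists of some number of
padding symbols followed by `r`. -/
def IsPadding (r : List A) (T : List (Option A)) : Prop :=
  ∃ m, T = List.replicate m none ++ r.map some

theorem isPadding_padOne (n : ℕ) (r : List A) : IsPadding r (padOne n r) := ⟨_, rfl⟩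

theorem IsPadding.filterMap_id_eq (h : IsPadding r T) : T.filterMap id = r := by
  obtain ⟨m, rfl⟩ := h
  simp [List.filterMap_append, List.filterMap_map]

theorem IsPadding.length_le (h : IsPadding r T) : r.length ≤ T.length := by
  obtain ⟨m, rfl⟩ := h
  simp

theorem IsPadding.padOne_length_eq (h : IsPadding r T) : padOne T.length r = T := by
  obtain ⟨m, rfl⟩ := h
  simp [padOne]

theorem isPadding_replicate_append_iff (m : ℕ) :
    IsPadding r (List.replicate m none ++ T) ↔ IsPadding r T := by
  refine ⟨fun h => ?_, fun ⟨k, hk⟩ => ⟨m + k, by simp [hk, ← List.append_assoc]⟩⟩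
  induction m with
  | zero => simpa using h
  | succ m ih =>
    obtain ⟨_ | k, hk⟩ := h
    · cases r <;> simp [List.replicate_succ] at hk
    · exact ih ⟨k, by simpa [List.replicate_succ] using hk⟩

theorem length_padOne_of_le {n : ℕ} (h : r.length ≤ n) : (padOne n r).length = n := by
  simp [padOne, h]

/-- The word `w` over `(A ∪ {#})^ι` encodes the tuple `t : ℕ^ι`: its `i`-th track is a padding of
`rep_S (t i)`. In contrast to `padTuple`, all tracks may start with a padding symbol. -/
def ANS.Encodes (S : ANS A) (w : List (ι → Option A)) (t : ι → ℕ) : Prop :=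
  ∀ i, IsPadding (S.rep (t i)) (w.map (· i))

namespace ANS

variable {S : ANS A} {w w' : List (ι → Option A)} {t t' : ι → ℕ}

theorem Encodes.right_unique (h : S.Encodes w t) (h' : S.Encodes w t') : t = t' :=
  funext fun i => S.inj <| (h i).filterMap_id_eq.symm.trans (h' i).filterMap_id_eq

theorem Encodes.eq_of_length_eq (h : S.Encodes w t) (h' : S.Encodes w' t)
    (hlen : w.length = w'.length) : w = w' := by
  refine List.ext_getElem hlen fun j hj hj' => funext fun i => ?_
  have track_eq : w.map (· i) = w'.map (· i) := by
    rw [← (h i).padOne_length_eq, ← (h' i).padOne_length_eq, List.length_map, List.length_map, hlen]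
  simpa [hj, hj'] using congrArg (·[j]?) track_eq

theorem encodes_replicate_append_iff (m : ℕ) :
    S.Encodes (List.replicate m (fun _ => none) ++ w) t ↔ S.Encodes w t := by
  simp only [Encodes, List.map_append, List.map_replicate, isPadding_replicate_append_iff]

theorem encodes_map_comp_iff (f : κ → ι) {u : κ → ℕ} :
    S.Encodes (w.map (· ∘ f)) u ↔ ∀ k, IsPadding (S.rep (u k)) (w.map (· (f k))) := by
  simp only [Encodes, List.map_map]
  rfl

theorem Encodes.map_comp (h : S.Encodes w t) (f : κ → ι) : S.Encodes (w.map (· ∘ f)) (t ∘ f) :=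
  (encodes_map_comp_iff f).2 fun k => h (f k)

theorem encodes_ofFn_padOne {n : ℕ} (h : ∀ i, (S.rep (t i)).length ≤ n) :
    S.Encodes (List.ofFn fun j : Fin n => fun i => (padOne n (S.rep (t i))).getD j none) t := by
  intro i
  convert isPadding_padOne n (S.rep (t i)) using 1
  refine List.ext_getElem (by simp [length_padOne_of_le (h i)]) fun j _ hj => ?_
  simp [hj]

theorem Encodes.eq_replicate_append (h : S.Encodes w t) (h' : S.Encodes w' t)
    (hlen : w'.length ≤ w.length) :
    w = List.replicate (w.length - w'.length) (fun _ => none) ++ w' :=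
  h.eq_of_length_eq ((encodes_replicate_append_iff _).2 h') (by simp [hlen])

theorem Encodes.exists_map_comp [Finite ι] {f : κ → ι} {v : List (κ → Option A)}
    (h : S.Encodes v (t ∘ f)) :
    ∃ m w, S.Encodes w t ∧ w.map (· ∘ f) = List.replicate m (fun _ => none) ++ v := by
  obtain ⟨m, hm⟩ := Set.finite_range (fun i => (S.rep (t i)).length) |>.bddAbove
  have enc := encodes_ofFn_padOne (S := S) (t := t) (n := m + v.length) fun i =>
    (hm ⟨i, rfl⟩).trans (Nat.le_add_right _ _)
  refine ⟨m, _, enc, (enc.map_comp f).eq_of_length_eq ?_ (by simp)⟩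
  exact (encodes_replicate_append_iff m).2 h

variable {d : ℕ} {n : Fin d → ℕ} {v : List (Fin d → Option A)}

theorem encodes_padTuple : S.Encodes (padTuple fun i => S.rep (n i)) n :=
  encodes_ofFn_padOne fun i =>
    Finset.le_sup (f := fun i => (S.rep (n i)).length) (Finset.mem_univ i)

theorem length_padTuple_le_of_encodes (h : S.Encodes v n) :
    (padTuple fun i => S.rep (n i)).length ≤ v.length := by
  simp only [padTuple, List.length_ofFn, Finset.sup_le_iff, Finset.mem_univ, true_imp_iff]
  exact fun i => by simpa using (h i).length_le

theorem eq_padTuple_iff :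
    v = (padTuple fun i => S.rep (n i)) ↔ S.Encodes v n ∧ ∀ u, v ≠ (fun _ => none) :: u := by
  constructor
  · rintro rfl
    refine ⟨encodes_padTuple, fun u hu => ?_⟩
    have enc : S.Encodes u n :=
      (encodes_replicate_append_iff 1).1 (by simpa [← hu] using encodes_padTuple)
    simpa [hu] using length_padTuple_le_of_encodes enc
  · rintro ⟨h, hv⟩
    have eq := h.eq_replicate_append encodes_padTuple (length_padTuple_le_of_encodes h)
    cases hm : v.length - (padTuple fun i => S.rep (n i)).length with
    | zero => simpa [hm] using eq
    | succ m => exact absurd eq (by simpa [hm, List.replicate_succ] using hv _)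

theorem encodes_dropWhile_iff {p : (ι → Option A) → Bool} (hp : ∀ a, p a → a = fun _ => none) :
    S.Encodes (w.dropWhile p) t ↔ S.Encodes w t := by
  have padding : w.takeWhile p = List.replicate (w.takeWhile p).length fun _ => none :=
    List.eq_replicate_of_mem fun a ha => hp a (List.mem_takeWhile_imp ha)
  conv_rhs => rw [← List.takeWhile_append_dropWhile (p := p) (l := w), padding,
    encodes_replicate_append_iff]

end ANS

end Encodings

/-! ### First-order definability over an abstract numeration system -/

section Definability

namespace ANS

open Language
open Sum (inl inr)

variable {A C ι κ : Type*} {S : ANS A}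

/-- The language of all encodings of the tuples satisfying `P`. -/
def codes (S : ANS A) (P : (ι → ℕ) → Prop) : Language (ι → Option A) :=
  {w | ∃ t, P t ∧ S.Encodes w t}

/-- A predicate on tuples indexed by `ι` is `S`-definable if the encodings of the tuples satisfying
it form a regular language. For `ι = Fin d` this is `S`-recognizability, see
`ANS.recognizable_iff_definable`; arbitrary index types make room for quantified variables. -/
def Definable (S : ANS A) (P : (ι → ℕ) → Prop) : Prop :=
  (S.codes P).IsRegular

theorem Encodes.mem_codes_iff {w : List (ι → Option A)} {t : ι → ℕ} {P : (ι → ℕ) → Prop}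
    (h : S.Encodes w t) : w ∈ S.codes P ↔ P t :=
  ⟨fun ⟨_, ht, h'⟩ => h.right_unique h' ▸ ht, fun ht => ⟨t, ht, h⟩⟩

theorem recognizable_iff_definable {d : ℕ} {Y : Set (Fin d → ℕ)} :
    S.Recognizable Y ↔ S.Definable (· ∈ Y) := by
  classical
  let L : Language (Fin d → Option A) := {w | ∃ t ∈ Y, w = padTuple fun i => S.rep (t i)}
  let p (a : Fin d → Option A) : Bool := a = fun _ => none
  have dropWhile_mem (w) : w.dropWhile p ∈ L ↔ w ∈ S.codes (· ∈ Y) := by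
    refine exists_congr fun t => and_congr_right fun _ => ?_
    rw [eq_padTuple_iff, encodes_dropWhile_iff (by simp [p]), and_iff_left]
    intro u hu
    simpa [hu, p] using List.head?_dropWhile_not p w
  have mem (w) : w ∈ L ↔ w ∈ S.codes (· ∈ Y) ∧ ∀ u, w ≠ (fun _ => none) :: u := by
    change (∃ t ∈ Y, _) ↔ (∃ t, t ∈ Y ∧ _) ∧ _
    simp_rw [eq_padTuple_iff, ← and_assoc, exists_and_right]
  rw [Recognizable, isRegularLang_iff_isRegular (L := L), Definable]
  constructor <;> intro h
  · exact isRegular_congr (isRegular_dropWhile_mem h p) fun w => (dropWhile_mem w).symm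
  · exact isRegular_congr (h.inf (isRegular_forall_ne_cons _)) mem

theorem Definable.congr {P Q : (ι → ℕ) → Prop} (h : S.Definable P) (hPQ : ∀ t, P t ↔ Q t) :
    S.Definable Q :=
  (funext fun t => propext (hPQ t) : P = Q) ▸ h

theorem Definable.exists_eq_comp [Finite κ] {P : (κ → ℕ) → Prop} (h : S.Definable P)
    (f : ι → κ) : S.Definable fun t : ι → ℕ => ∃ u, P u ∧ t = u ∘ f := by
  refine isRegular_congr (isRegular_map_of_leading_replicate h (· ∘ f) fun _ => none)
    fun w => ⟨?_, ?_⟩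
  · rintro ⟨_, ⟨u, hu, rfl⟩, hw⟩
    obtain ⟨m, v, hv, hvw⟩ := hw.exists_map_comp
    exact ⟨m, v, ⟨u, hu, hv⟩, hvw⟩
  · rintro ⟨m, v, ⟨u, hu, hv⟩, hvw⟩
    exact ⟨_, ⟨u, hu, rfl⟩, (encodes_replicate_append_iff m).1 (hvw ▸ hv.map_comp f)⟩

theorem Definable.exists_tuple [Finite ι] [Finite κ] {P : (ι → ℕ) → (κ → ℕ) → Prop}
    (h : S.Definable fun t : ι ⊕ κ → ℕ => P (t ∘ inl) (t ∘ inr)) :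
    S.Definable fun t => ∃ u, P t u :=
  (h.exists_eq_comp inl).congr fun t =>
    ⟨fun ⟨u, hu, ht⟩ => ⟨u ∘ inr, ht ▸ hu⟩, fun ⟨u, hu⟩ => ⟨Sum.elim t u, hu, rfl⟩⟩

theorem Definable.exists_nat [Finite ι] {P : (ι → ℕ) → ℕ → Prop}
    (h : S.Definable fun t : ι ⊕ Unit → ℕ => P (t ∘ inl) (t (inr ()))) :
    S.Definable fun t => ∃ n, P t n :=
  (Definable.exists_tuple (P := fun t u => P t (u ())) h).congr fun _ =>
    ⟨fun ⟨u, hu⟩ => ⟨u (), hu⟩, fun ⟨n, hn⟩ => ⟨fun _ => n, hn⟩⟩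

theorem Addable.isRegularANS (hadd : S.Addable) : S.IsRegularANS := by
  rw [Addable, recognizable_iff_definable] at hadd
  rw [IsRegularANS, recognizable_iff_definable]
  refine (hadd.exists_eq_comp (fun _ : Fin 1 => 0)).congr fun t => ?_
  refine ⟨fun _ => trivial, fun _ => ⟨![t 0, 0, t 0], by simp, funext fun i => ?_⟩⟩
  rw [Subsingleton.elim i 0]
  rfl

section Finite

variable [Finite ι] (hS : S.IsRegularANS) {P Q : (ι → ℕ) → Prop}
include hS

theorem definable_true : S.Definable fun _ : ι → ℕ => True := by
  rw [IsRegularANS, recognizable_iff_definable] at hS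
  refine isRegular_congr (isRegular_forall fun i : ι =>
    isRegular_preimage hS (φ := List.map (· ∘ fun _ => i)) fun _ _ => List.map_append)
    fun w => ⟨?_, fun hw => ?_⟩
  · rintro ⟨t, -, ht⟩ i
    exact ⟨_, trivial, ht.map_comp _⟩
  · choose t _ ht using hw
    exact ⟨fun i => t i 0, trivial, fun i => (encodes_map_comp_iff _).1 (ht i) 0⟩

theorem definable_of_isRegular {L : Language (ι → Option A)} (hL : L.IsRegular)
    (h : ∀ w t, S.Encodes w t → (w ∈ L ↔ P t)) : S.Definable P :=
  isRegular_congr ((definable_true hS).inf hL) fun w =>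
    ⟨fun ⟨t, ht, hw⟩ => ⟨⟨t, trivial, hw⟩, (h w t hw).2 ht⟩,
      fun ⟨⟨t, _, hw⟩, hwL⟩ => ⟨t, (h w t hw).1 hwL, hw⟩⟩

theorem Definable.not (h : S.Definable P) : S.Definable fun t => ¬ P t :=
  definable_of_isRegular hS h.compl fun _ _ hw => not_congr hw.mem_codes_iff

theorem definable_const (p : Prop) : S.Definable fun _ : ι → ℕ => p := by
  by_cases hp : p
  · simpa [hp] using definable_true hS
  · simpa [hp] using (definable_true hS).not hS

theorem Definable.forall_finite [Finite κ] {P : κ → (ι → ℕ) → Prop}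
    (h : ∀ k, S.Definable (P k)) : S.Definable fun t => ∀ k, P k t :=
  definable_of_isRegular hS (isRegular_forall h) fun _ _ hw =>
    forall_congr' fun _ => hw.mem_codes_iff

theorem Definable.and (h : S.Definable P) (h' : S.Definable Q) : S.Definable fun t => P t ∧ Q t :=
  definable_of_isRegular hS (h.inf h') fun _ _ hw => and_congr hw.mem_codes_iff hw.mem_codes_iff

theorem Definable.imp (h : S.Definable P) (h' : S.Definable Q) :
    S.Definable fun t => P t → Q t :=
  ((h.and hS (h'.not hS)).not hS).congr fun _ => by tauto

theorem Definable.iff (h : S.Definable P) (h' : S.Definable Q) :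
    S.Definable fun t => P t ↔ Q t :=
  ((h.imp hS h').and hS (h'.imp hS h)).congr fun _ => iff_def.symm

theorem Definable.exists_finite [Finite κ] {P : κ → (ι → ℕ) → Prop}
    (h : ∀ k, S.Definable (P k)) : S.Definable fun t => ∃ k, P k t :=
  ((Definable.forall_finite hS fun k => (h k).not hS).not hS).congr fun _ => by simp

theorem Definable.boolean_combination [Finite κ] {P : κ → (ι → ℕ) → Prop}
    (h : ∀ k, S.Definable (P k)) (F : (κ → Prop) → Prop) : S.Definable fun t => F (P · t) := by
  have table : S.Definable fun t => ∃ v, F v ∧ ∀ k, P k t ↔ v k :=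
    Definable.exists_finite hS fun v => (definable_const hS _).and hS <|
      Definable.forall_finite hS fun k => (h k).iff hS (definable_const hS _)
  refine table.congr fun t => ⟨?_, fun hF => ⟨_, hF, fun _ => .rfl⟩⟩
  rintro ⟨v, hv, hP⟩
  rwa [show (P · t) = v from funext fun k => propext (hP k)]

theorem Definable.comp {R : (κ → ℕ) → Prop} (h : S.Definable R) (f : κ → ι) :
    S.Definable fun t : ι → ℕ => R (t ∘ f) :=
  definable_of_isRegular hS (isRegular_preimage h fun _ _ => List.map_append) fun _ _ hw =>
    (hw.map_comp f).mem_codes_iff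

theorem Definable.forall_nat {P : (ι → ℕ) → ℕ → Prop}
    (h : S.Definable fun t : ι ⊕ Unit → ℕ => P (t ∘ inl) (t (inr ()))) :
    S.Definable fun t => ∀ n, P t n :=
  ((Definable.exists_nat (P := fun t n => ¬ P t n) (h.not hS)).not hS).congr fun _ => by simp

theorem definable_letter {x : ℕ → C} (hx : SAutomatic S x) (i : ι) (c : C) :
    S.Definable fun t : ι → ℕ => x (t i) = c := by
  obtain ⟨Q, _, M, τ, hM⟩ := hx
  let N : DFA A Q := { M with accept := {q | τ q = c} }
  have hN : N.accepts.IsRegular := ⟨Q, inferInstance, N, rfl⟩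
  refine definable_of_isRegular hS (isRegular_preimage hN
    (φ := fun w : List (ι → Option A) => (w.map (· i)).filterMap id)
    fun _ _ => by simp) fun w t hw => ?_
  change τ (M.eval ((w.map (· i)).filterMap id)) = c ↔ x (t i) = c
  rw [(hw i).filterMap_id_eq, hM]

end Finite

section Addable

variable [Finite ι] (hadd : S.Addable)
include hadd

theorem definable_add_eq (i j k : ι) : S.Definable fun t : ι → ℕ => t i + t j = t k :=
  (recognizable_iff_definable.1 hadd).comp hadd.isRegularANS ![i, j, k]

theorem definable_le (i j : ι) : S.Definable fun t : ι → ℕ => t i ≤ t j :=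
  (Definable.exists_nat (P := fun t n => t i + n = t j)
    (definable_add_eq hadd (inl i) (inr ()) (inl j))).congr fun _ =>
    le_iff_exists_add.trans (exists_congr fun _ => eq_comm) |>.symm

theorem definable_lt (i j : ι) : S.Definable fun t : ι → ℕ => t i < t j :=
  ((definable_le hadd j i).not hadd.isRegularANS).congr fun _ => not_le

theorem definable_eq (i j : ι) : S.Definable fun t : ι → ℕ => t i = t j :=
  ((definable_le hadd i j).and hadd.isRegularANS (definable_le hadd j i)).congr fun _ =>
    le_antisymm_iff.symm

theorem definable_monotone [Preorder ι] : S.Definable fun t : ι → ℕ => Monotone t :=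
  have hS := hadd.isRegularANS
  Definable.forall_finite hS fun i => Definable.forall_finite hS fun j =>
    (definable_const hS (i ≤ j)).imp hS (definable_le hadd i j)

variable {x : ℕ → C} (hx : SAutomatic S x)
include hx

theorem definable_letter_add (i j : ι) (c : C) :
    S.Definable fun t : ι → ℕ => x (t i + t j) = c :=
  (Definable.exists_nat (P := fun t n => t i + t j = n ∧ x n = c)
    ((definable_add_eq hadd (inl i) (inl j) (inr ())).and hadd.isRegularANS
      (definable_letter hadd.isRegularANS hx (inr ()) c))).congr fun _ => by simp

theorem definable_factor_eq [Finite C] (i j k : ι) :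
    S.Definable fun t : ι → ℕ => ∀ n < t k, x (t i + n) = x (t j + n) := by
  have hS := hadd.isRegularANS
  refine Definable.forall_nat hS (P := fun t n => n < t k → x (t i + n) = x (t j + n)) ?_
  refine (definable_lt hadd (inr ()) (inl k)).imp hS ?_
  refine (Definable.forall_finite hS fun c =>
    (definable_letter_add hadd hx (inl i) (inr ()) c).iff hS
      (definable_letter_add hadd hx (inl j) (inr ()) c)).congr fun t => ?_
  exact ⟨fun h => ((h _).1 rfl).symm, fun h c => h ▸ Iff.rfl⟩

end Addable

end ANS

end Definability

/-! ### Factors of infinite words -/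

section Factors

variable {C κ : Type*} {x y : ℕ → C} {p q m n : ℕ}

/-- The factor `x[p..p+n-1]` of the infinite word `x`. -/
def factor (x : ℕ → C) (p n : ℕ) : List C :=
  List.ofFn fun i : Fin n => x (p + i)

theorem length_factor : (factor x p n).length = n :=
  List.length_ofFn

theorem factor_zero_left : factor x 0 n = List.ofFn fun i : Fin n => x i := by
  simp [factor]

theorem factor_eq_factor_iff : factor x p n = factor y q n ↔ ∀ i < n, x (p + i) = y (q + i) := by
  simp [factor, List.ofFn_inj, funext_iff, Fin.forall_iff]

theorem factor_add : factor x p (m + n) = factor x p m ++ factor x (p + m) n := by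
  simp [factor, List.ofFn_add, add_assoc]

theorem factor_succ_eq_append_singleton_iff {w : List C} {c : C} :
    factor x p (n + 1) = w ++ [c] ↔ factor x p n = w ∧ x (p + n) = c := by
  rw [factor_add, show factor x (p + n) 1 = [x (p + n)] by simp [factor],
    List.append_singleton_inj]

theorem factor_eq_factor_of_le (h : factor x p n = factor y q n) (hmn : m ≤ n) :
    factor x p m = factor y q m :=
  factor_eq_factor_iff.2 fun i hi => factor_eq_factor_iff.1 h i (hi.trans_le hmn)

/-- The factors of `x` occurring at one of the positions `p l`. -/
def factorsAt (x : ℕ → C) (p : κ → ℕ) : Set (List C) :=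
  {w | ∃ l, factor x (p l) w.length = w}

/-- The language of all factors of `x`. -/
def factors (x : ℕ → C) : Set (List C) :=
  factorsAt x id

theorem append_singleton_mem_factorsAt_iff {p : κ → ℕ} {w : List C} {c : C} :
    w ++ [c] ∈ factorsAt x p ↔ ∃ l, factor x (p l) w.length = w ∧ x (p l + w.length) = c := by
  simp only [factorsAt, Set.mem_ofPred_eq, List.length_append, List.length_singleton,
    factor_succ_eq_append_singleton_iff]

theorem factor_mem_factorsAt (p : κ → ℕ) (l : κ) : factor x (p l) n ∈ factorsAt x p :=
  ⟨l, by rw [length_factor]⟩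

theorem factor_mem_factors : factor x p n ∈ factors x :=
  factor_mem_factorsAt id p

theorem factorsAt_subset_factors (p : κ → ℕ) : factorsAt x p ⊆ factors x :=
  fun _ ⟨l, hl⟩ => ⟨p l, hl⟩

theorem mem_orbitClosure_iff : y ∈ orbitClosure x ↔ ∀ n, factor y 0 n ∈ factors x := by
  refine forall_congr' fun n => exists_congr fun m => ?_
  rw [length_factor, eq_comm, factor_eq_factor_iff]
  simp only [zero_add, id]

theorem langOf_orbitClosure : LangOf (orbitClosure x) = factors x := by
  ext w
  constructor
  · rintro ⟨y, hy, p, hw⟩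
    obtain ⟨m, hm⟩ := hy (p + w.length)
    refine ⟨m + p, .trans (factor_eq_factor_iff.2 fun i hi => ?_) hw.symm⟩
    rw [hm _ (by lia), id, add_assoc]
  · rintro ⟨p, hp⟩
    exact ⟨x, fun _ => ⟨0, fun i _ => by rw [zero_add]⟩, p, hp.symm⟩

/-- The words of length `n` of the language `T`. -/
def level (T : Set (List C)) (n : ℕ) : Set (List C) :=
  {w ∈ T | w.length = n}

theorem level_finite [Finite C] (T : Set (List C)) (n : ℕ) : (level T n).Finite :=
  (List.finite_length_eq C n).subset fun _ => And.right

theorem level_factorsAt (p : κ → ℕ) :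
    level (factorsAt x p) n = Set.range fun l => factor x (p l) n := by
  ext w
  constructor
  · rintro ⟨⟨l, hl⟩, rfl⟩
    exact ⟨l, hl⟩
  · rintro ⟨l, rfl⟩
    exact ⟨factor_mem_factorsAt p l, length_factor⟩

theorem factorComplexity_eq_ncard_level : factorComplexity x n = (level (factors x) n).ncard := by
  rw [factors, level_factorsAt]
  simp only [factorComplexity, factor, id, Set.range, eq_comm]

end Factors

/-! ### Trees of words -/

section Trees

variable {C κ : Type*} {T T' : Set (List C)} {a m n : ℕ}

/-- The tree `T` is closed under taking prefixes. -/
def PrefixClosed (T : Set (List C)) : Prop :=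
  ∀ u v, u ++ v ∈ T → u ∈ T

/-- Every node of `T` at depth `n` has exactly `a` children. -/
def HasBranching (T : Set (List C)) (a n : ℕ) : Prop :=
  ∀ w ∈ T, w.length = n → {c | w ++ [c] ∈ T}.ncard = a

theorem PrefixClosed.factor_mem (hT : PrefixClosed T) {x : ℕ → C} {p : ℕ} (h : factor x p n ∈ T)
    (hmn : m ≤ n) : factor x p m ∈ T := by
  obtain ⟨k, rfl⟩ := Nat.exists_eq_add_of_le hmn
  exact hT _ _ (factor_add ▸ h)

theorem prefixClosed_factorsAt (x : ℕ → C) (p : κ → ℕ) : PrefixClosed (factorsAt x p) := by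
  rintro u v ⟨l, hl⟩
  rw [List.length_append, factor_add] at hl
  exact ⟨l, List.append_inj_left hl length_factor⟩

theorem prefixClosed_factors (x : ℕ → C) : PrefixClosed (factors x) :=
  prefixClosed_factorsAt x id

theorem HasBranching.congr (h : HasBranching T a n)
    (hTT' : ∀ w : List C, w.length ≤ n + 1 → (w ∈ T ↔ w ∈ T')) : HasBranching T' a n := by
  intro w hw hn
  rw [← h w ((hTT' w (by lia)).2 hw) hn]
  congr 1
  ext c
  exact (hTT' _ (by simp [hn])).symm

theorem level_succ (hT : PrefixClosed T) :
    level T (n + 1) = ⋃ w ∈ level T n, (w ++ [·]) '' {c | w ++ [c] ∈ T} := by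
  ext w
  simp only [Set.mem_iUnion, exists_prop]
  constructor
  · rintro ⟨hw, hn⟩
    obtain rfl | ⟨v, c, rfl⟩ := w.eq_nil_or_concat'
    · simp at hn
    · exact ⟨v, ⟨hT v _ hw, by simpa using hn⟩, c, hw, rfl⟩
  · rintro ⟨v, ⟨-, hn⟩, c, hc, rfl⟩
    exact ⟨hc, by simp [hn]⟩

theorem ncard_level_succ [Finite C] (hT : PrefixClosed T) :
    (level T (n + 1)).ncard = ∑ w ∈ (level_finite T n).toFinset, {c | w ++ [c] ∈ T}.ncard := by
  have hinj (w : List C) : Function.Injective (w ++ [·] : C → List C) := fun a b h => by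
    simpa using h
  rw [level_succ hT, (level_finite T n).ncard_biUnion fun _ _ => Set.toFinite _,
    finsum_mem_eq_finite_toFinset_sum _ (level_finite T n)]
  · simp only [Set.ncard_image_of_injective _ (hinj _)]
  · rintro v - w - hvw
    refine Set.disjoint_left.2 ?_
    rintro _ ⟨a, -, rfl⟩ ⟨b, -, hb⟩
    exact hvw (List.append_inj_left' hb rfl).symm

theorem ncard_level_eq_prod [Finite C] {b : ℕ → ℕ} (hnil : [] ∈ T) (hT : PrefixClosed T)
    (h : ∀ n, HasBranching T (b n) n) : (level T n).ncard = ∏ i ∈ Finset.range n, b i := by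
  induction n with
  | zero =>
    have : level T 0 = {[]} := by
      ext w
      simpa [level] using fun hw => hw ▸ hnil
    rw [this, Set.ncard_singleton, Finset.prod_range_zero]
  | succ n ih =>
    rw [ncard_level_succ hT, Finset.prod_range_succ, ← ih]
    have hb (w) (hw : w ∈ (level_finite T n).toFinset) : {c | w ++ [c] ∈ T}.ncard = b n :=
      have hw := (level_finite T n).mem_toFinset.1 hw
      h n w hw.1 hw.2
    rw [Finset.sum_congr rfl hb, Finset.sum_const, smul_eq_mul,
      Set.ncard_eq_toFinset_card _ (level_finite T n)]

theorem PrefixClosed.exists_branch (hT : PrefixClosed T) (h : ∀ w ∈ T, ∃ c, w ++ [c] ∈ T)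
    {w : List C} (hw : w ∈ T) : ∃ y : ℕ → C, factor y 0 w.length = w ∧ ∀ n, factor y 0 n ∈ T := by
  have : Nonempty C := (h w hw).nonempty
  choose! next hnext using h
  let node (k : ℕ) : List C := (fun v => v ++ [next v])^[k] w
  have node_succ (k) : node (k + 1) = node k ++ [next (node k)] :=
    Function.iterate_succ_apply' _ k w
  have node_mem (k) : node k ∈ T := by
    induction k with
    | zero => exact hw
    | succ k ih => exact node_succ k ▸ hnext _ ih
  let y (i : ℕ) : C := if h : i < w.length then w[i] else next (node (i - w.length))
  have factor_length : factor y 0 w.length = w := by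
    refine List.ext_getElem length_factor fun i _ hi => ?_
    simp [factor, y]
  have factor_eq (k) : factor y 0 (w.length + k) = node k := by
    induction k with
    | zero => exact factor_length
    | succ k ih =>
      rw [node_succ, ← add_assoc, factor_succ_eq_append_singleton_iff]
      exact ⟨ih, by simp [y]⟩
  exact ⟨y, factor_length, fun n =>
    hT.factor_mem (factor_eq n ▸ node_mem n) (Nat.le_add_left n w.length)⟩

end Trees

/-! ### Winning shifts of orbit closures -/

section WinningShift

open Filter

variable {A C ι κ η : Type*} {S : ANS A} {X : Set (ℕ → C)} {T : Set (List C)} {α : ℕ → ℕ}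
  {x : ℕ → C} {a n : ℕ}

namespace IsStrategyTree

variable (hT : IsStrategyTree X α T)
include hT

theorem nil_mem : [] ∈ T := hT.1

theorem prefixClosed : PrefixClosed T := hT.2.1

theorem hasBranching (n : ℕ) : HasBranching T (α n + 1) n :=
  fun w hw hn => hn ▸ hT.2.2.1 w hw

theorem exists_branch {w : List C} (hw : w ∈ T) :
    ∃ y ∈ X, factor y 0 w.length = w ∧ ∀ n, factor y 0 n ∈ T := by
  have hext (v) (hv : v ∈ T) : ∃ c, v ++ [c] ∈ T :=
    Set.nonempty_of_ncard_ne_zero (s := {c | v ++ [c] ∈ T}) (by simp [hT.2.2.1 v hv])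
  obtain ⟨y, hyw, hy⟩ := hT.prefixClosed.exists_branch hext hw
  exact ⟨y, hT.2.2.2 y fun n => factor_zero_left (x := y) ▸ hy n, hyw, hy⟩

theorem subset_langOf : T ⊆ LangOf X := fun _ hw =>
  have ⟨y, hyX, hyw, _⟩ := hT.exists_branch hw
  ⟨y, hyX, 0, hyw.symm⟩

theorem ncard_level [Finite C] : (level T n).ncard = ∏ i ∈ Finset.range n, (α i + 1) :=
  ncard_level_eq_prod hT.nil_mem hT.prefixClosed hT.hasBranching

theorem level_nonempty [Finite C] (n : ℕ) : (level T n).Nonempty :=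
  Set.nonempty_of_ncard_ne_zero <| by
    rw [hT.ncard_level]
    exact Finset.prod_ne_zero_iff.2 fun i _ => (α i).succ_ne_zero

end IsStrategyTree

theorem mem_winningShift_of_forall_exists_tree [Finite C] {T : ℕ → Set (List C)}
    (hnil : ∀ N, [] ∈ T N) (hpre : ∀ N, PrefixClosed (T N))
    (hbranch : ∀ N, ∀ n < N, HasBranching (T N) (α n + 1) n)
    (hX : ∀ y, (∀ n, ∃ N, factor y 0 n ∈ T N) → y ∈ X) : α ∈ winningShift X := by
  let U := hyperfilter ℕ
  let L : Set (List C) := {w | ∀ᶠ N in U, w ∈ T N}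
  refine ⟨L, .of_forall hnil, fun u v h => h.mono fun N => hpre N u v, fun w hw => ?_,
    fun y hy => hX y fun n => factor_zero_left (x := y) ▸ (hy n).exists⟩
  have decided (c : C) : ∀ᶠ N in U, w ++ [c] ∈ L ↔ w ++ [c] ∈ T N := by
    by_cases hc : w ++ [c] ∈ L
    · exact hc.mono fun N hN => iff_of_true hc hN
    · exact (Ultrafilter.eventually_not.2 hc).mono fun N hN => iff_of_false hc hN
  have large : ∀ᶠ N in U, w.length < N := Nat.hyperfilter_le_atTop (eventually_gt_atTop _)
  obtain ⟨N, hwN, hN, hlt⟩ := (hw.and ((eventually_all.2 decided).and large)).exists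
  simp only [hN, hbranch N _ hlt w hwN rfl]

theorem IsStrategyTree.exists_factorsAt [Finite C] [Finite κ] {N : ℕ}
    (hT : IsStrategyTree (orbitClosure x) α T)
    (hκ : ∏ i ∈ Finset.range N, (α i + 1) ≤ Nat.card κ) :
    ∃ p : κ → ℕ, ∀ w : List C, w.length ≤ N → (w ∈ T ↔ w ∈ factorsAt x p) := by
  have := (level_finite T N).to_subtype
  have := (hT.level_nonempty N).to_subtype
  obtain ⟨e⟩ : Nonempty (level T N ↪ κ) := by
    have := Fintype.ofFinite κ
    have := Fintype.ofFinite (level T N)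
    refine Function.Embedding.nonempty_of_card_le ?_
    rwa [← Nat.card_eq_fintype_card, ← Nat.card_eq_fintype_card, Nat.card_coe_set_eq,
      hT.ncard_level]
  let g : κ → level T N := Function.invFun e
  have hg : g.Surjective := Function.invFun_surjective e.injective
  have occurs (l : κ) : ∃ p, factor x p N = g l := by
    obtain ⟨p, hp⟩ := langOf_orbitClosure.subset (hT.subset_langOf (g l).2.1)
    rw [(g l).2.2] at hp
    exact ⟨p, hp⟩
  choose p hp using occurs
  refine ⟨p, fun w hw => ⟨fun hwT => ?_, fun ⟨l, hl⟩ => ?_⟩⟩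
  · obtain ⟨y, -, hyw, hy⟩ := hT.exists_branch hwT
    obtain ⟨l, hl⟩ := hg ⟨factor y 0 N, hy N, length_factor⟩
    exact ⟨l, (factor_eq_factor_of_le ((hp l).trans (congrArg _ hl)) hw).trans hyw⟩
  · rw [← hl]
    exact hT.prefixClosed.factor_mem (hp l ▸ (g l).2.1) hw

theorem mem_winningShift_orbitClosure_iff [Finite C] [Finite κ] [Nonempty κ]
    (hκ : ∀ N, ∏ i ∈ Finset.range N, (α i + 1) ≤ Nat.card κ) :
    α ∈ winningShift (orbitClosure x) ↔
      ∀ N, ∃ p : κ → ℕ, ∀ n < N, HasBranching (factorsAt x p) (α n + 1) n := by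
  constructor
  · rintro ⟨T, hT⟩ N
    obtain ⟨p, hp⟩ := hT.exists_factorsAt (hκ N)
    exact ⟨p, fun n hn => (hT.hasBranching n).congr fun w hw => hp w (by lia)⟩
  · intro h
    choose p hp using h
    refine mem_winningShift_of_forall_exists_tree (T := fun N => factorsAt x (p N))
      (fun N => ⟨Classical.arbitrary κ, rfl⟩) (fun N => prefixClosed_factorsAt x _) hp
      fun y hy => mem_orbitClosure_iff.2 fun n => ?_
    obtain ⟨N, hN⟩ := hy n
    exact factorsAt_subset_factors _ hN

theorem hasBranching_factorsAt_iff {p : κ → ℕ} :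
    HasBranching (factorsAt x p) a n ↔
      ∀ l, {c | ∃ l', (∀ i < n, x (p l' + i) = x (p l + i)) ∧ x (p l' + n) = c}.ncard = a := by
  have children (l : κ) : {c | factor x (p l) n ++ [c] ∈ factorsAt x p} =
      {c | ∃ l', (∀ i < n, x (p l' + i) = x (p l + i)) ∧ x (p l' + n) = c} := by
    simp only [append_singleton_mem_factorsAt_iff, length_factor, factor_eq_factor_iff]
  refine ⟨fun h l => children l ▸ h _ (factor_mem_factorsAt p l) length_factor, ?_⟩
  rintro h w ⟨l, hl⟩ rfl
  rw [← h l, ← children l, hl]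

open Sum (inl inr) in
theorem definable_hasBranching_factorsAt [Finite C] [Finite ι] [Finite κ] [Finite η]
    (hadd : S.Addable) (hx : SAutomatic S x) (f : κ → ι) (e : η → ι) (m : ι) :
    S.Definable fun t : ι → ℕ =>
      HasBranching (factorsAt x (t ∘ f)) ({i | t (e i) = t m}.ncard + 1) (t m) := by
  let atom : (κ × κ) ⊕ (κ × C) ⊕ η → (ι → ℕ) → Prop
    | inl (l, l'), t => ∀ i < t m, x (t (f l) + i) = x (t (f l') + i)
    | inr (inl (l, c)), t => x (t (f l) + t m) = c
    | inr (inr i), t => t (e i) = t m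
  have definable_atom : ∀ k, S.Definable (atom k)
    | inl (l, l') => ANS.definable_factor_eq hadd hx (f l) (f l') m
    | inr (inl (l, c)) => ANS.definable_letter_add hadd hx (f l) m c
    | inr (inr i) => ANS.definable_eq hadd (e i) m
  refine (ANS.Definable.boolean_combination hadd.isRegularANS definable_atom fun v =>
    ∀ l, {c | ∃ l', v (inl (l', l)) ∧ v (inr (inl (l', c)))}.ncard =
      {i | v (inr (inr i))}.ncard + 1).congr fun t => ?_
  rw [hasBranching_factorsAt_iff]
  rfl

theorem sum_ncard_fiber_le [Finite ι] (t : ι → ℕ) (F : Finset ℕ) :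
    ∑ j ∈ F, {i | t i = j}.ncard ≤ Nat.card ι := by
  have := Fintype.ofFinite ι
  simp only [Set.ncard_eq_toFinset_card', Set.toFinset_ofPred, Nat.card_eq_fintype_card]
  rw [Finset.sum_card_fiberwise_eq_card_filter]
  exact Finset.card_le_univ _

theorem prod_succ_le_two_pow_sum (α : ℕ → ℕ) (F : Finset ℕ) :
    ∏ i ∈ F, (α i + 1) ≤ 2 ^ ∑ i ∈ F, α i := by
  rw [← Finset.prod_pow_eq_pow_sum]
  exact Finset.prod_le_prod' fun i _ => Nat.lt_two_pow_self

open Sum (inl inr) in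
theorem weaklySCodable_winningShift_orbitClosure [Finite C] (hadd : S.Addable)
    (hx : SAutomatic S x) : WeaklySCodable S (winningShift (orbitClosure x)) := by
  intro k
  have hS := hadd.isRegularANS
  rw [ANS.recognizable_iff_definable]
  refine (ANS.definable_monotone hadd).and hS ?_
  have definable : S.Definable fun t : Fin k → ℕ => ∀ N, ∃ p : Fin (2 ^ k) → ℕ, ∀ n, n < N →
      HasBranching (factorsAt x p) ({i | t i = n}.ncard + 1) n := by
    refine ANS.Definable.forall_nat hS (P := fun t N => ∃ p : Fin (2 ^ k) → ℕ, ∀ n, n < N →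
      HasBranching (factorsAt x p) ({i | t i = n}.ncard + 1) n) ?_
    refine ANS.Definable.exists_tuple (P := fun t p => ∀ n, n < t (inr ()) →
      HasBranching (factorsAt x p) ({i | t (inl i) = n}.ncard + 1) n) ?_
    refine ANS.Definable.forall_nat hS (P := fun t n => n < t (inl (inr ())) →
      HasBranching (factorsAt x (t ∘ inr)) ({i | t (inl (inl i)) = n}.ncard + 1) n) ?_
    exact (ANS.definable_lt hadd (inr ()) (inl (inl (inr ())))).imp hS
      (definable_hasBranching_factorsAt hadd hx (fun l => inl (inr l))
        (fun i => inl (inl (inl i))) (inr ()))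
  refine definable.congr fun t => (mem_winningShift_orbitClosure_iff fun N => ?_).symm
  calc ∏ n ∈ Finset.range N, ({i | t i = n}.ncard + 1)
      ≤ 2 ^ ∑ n ∈ Finset.range N, {i | t i = n}.ncard := prod_succ_le_two_pow_sum _ _
    _ ≤ 2 ^ Nat.card (Fin k) := Nat.pow_le_pow_right two_pos (sum_ncard_fiber_le t _)
    _ = Nat.card (Fin (2 ^ k)) := by simp

end WinningShift

/-! ### Coding dimension -/

section CodingDimension

variable {C : Type*} {X : Set (ℕ → C)} {T : Set (List C)} {α : ℕ → ℕ} {n R : ℕ}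

/-- The right special words of length `n` in the language of `X`. -/
def rightSpecials (X : Set (ℕ → C)) (n : ℕ) : Set (List C) :=
  {w | w.length = n ∧ RightSpecial X w}

theorem rightSpecials_finite [Finite C] (X : Set (ℕ → C)) (n : ℕ) : (rightSpecials X n).Finite :=
  (List.finite_length_eq C n).subset fun _ => And.left

namespace IsStrategyTree

variable [Finite C] (hT : IsStrategyTree X α T)
include hT

theorem letter_le_card (n : ℕ) : α n ≤ Nat.card C := by
  obtain ⟨w, hw, hn⟩ := hT.level_nonempty n
  calc α n ≤ α n + 1 := Nat.le_succ _
    _ = {c | w ++ [c] ∈ T}.ncard := (hT.hasBranching n w hw hn).symm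
    _ ≤ Nat.card C := Set.ncard_le_card _

theorem level_subset_rightSpecials (hn : α n ≠ 0) : level T n ⊆ rightSpecials X n := by
  rintro w ⟨hw, hwn⟩
  have two_children : 1 < {c | w ++ [c] ∈ T}.ncard := by
    rw [hT.hasBranching n w hw hwn]
    lia
  obtain ⟨a, ha, b, hb, hab⟩ := (Set.one_lt_ncard (Set.toFinite _)).1 two_children
  exact ⟨hwn, a, b, hab, hT.subset_langOf ha, hT.subset_langOf hb⟩

theorem card_le_of_forall_ne_zero (hR : ∀ n, (rightSpecials X n).ncard ≤ R) {G : Finset ℕ}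
    (hG : ∀ i ∈ G, α i ≠ 0) : G.card ≤ R + 1 := by
  obtain rfl | hne := G.eq_empty_or_nonempty
  · simp
  let n := G.max' hne
  have hn : n ∈ G := G.max'_mem hne
  have two_pow_le : 2 ^ (G.erase n).card ≤ R :=
    calc 2 ^ (G.erase n).card ≤ ∏ i ∈ G.erase n, (α i + 1) :=
          Finset.pow_card_le_prod _ _ _ fun i hi => by
            have := hG i (Finset.mem_of_mem_erase hi)
            lia
      _ ≤ ∏ i ∈ Finset.range n, (α i + 1) :=
          Finset.prod_le_prod_of_subset_of_one_le'
            (fun i hi => Finset.mem_range.2 (G.lt_max'_of_mem_erase_max' hne hi)) (by simp)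
      _ = (level T n).ncard := hT.ncard_level.symm
      _ ≤ (rightSpecials X n).ncard :=
          Set.ncard_le_ncard (hT.level_subset_rightSpecials (hG n hn)) (rightSpecials_finite X n)
      _ ≤ R := hR n
  have := Nat.lt_two_pow_self (n := (G.erase n).card)
  have := Finset.card_erase_add_one hn
  lia

end IsStrategyTree

theorem finiteCodingDim_winningShift [Finite C] (hR : ∀ n, (rightSpecials X n).ncard ≤ R) :
    FiniteCodingDim (winningShift X) := by
  refine ⟨(R + 1) * Nat.card C, ?_⟩
  rintro α ⟨T, hT⟩ F
  calc ∑ i ∈ F, α i = ∑ i ∈ F with α i ≠ 0, α i := (Finset.sum_filter_ne_zero F).symm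
    _ ≤ (F.filter (α · ≠ 0)).card * Nat.card C :=
        Finset.sum_le_card_nsmul _ _ _ fun i _ => hT.letter_le_card i
    _ ≤ (R + 1) * Nat.card C := Nat.mul_le_mul_right _ <|
        hT.card_le_of_forall_ne_zero hR fun i hi => (Finset.mem_filter.1 hi).2

end CodingDimension

/-! ### Cassaigne's theorem on right special factors -/

section Cassaigne

variable {C κ : Type*} {x : ℕ → C} {c k m n δ : ℕ}

theorem drop_factor (p : ℕ) : (factor x p (k + m)).drop k = factor x (p + k) m := by
  rw [factor_add, List.drop_left' length_factor]

theorem drop_mem_factors {w : List C} (hw : w ∈ factors x) : w.drop k ∈ factors x := by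
  obtain ⟨p, hp⟩ := hw
  rw [← hp]
  obtain hk | hk := le_total k w.length
  · obtain ⟨m, hm⟩ := Nat.exists_eq_add_of_le hk
    rw [hm, drop_factor]
    exact factor_mem_factors
  · rw [List.drop_eq_nil_of_le (length_factor.trans_le hk)]
    exact ⟨0, rfl⟩

theorem mem_rightSpecials_orbitClosure_iff {w : List C} :
    w ∈ rightSpecials (orbitClosure x) n ↔
      w.length = n ∧ ∃ a b, a ≠ b ∧ w ++ [a] ∈ factors x ∧ w ++ [b] ∈ factors x := by
  rw [← langOf_orbitClosure]
  rfl

theorem drop_mem_rightSpecials {w : List C}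
    (hw : w ∈ rightSpecials (orbitClosure x) (k + m)) :
    w.drop k ∈ rightSpecials (orbitClosure x) m := by
  rw [mem_rightSpecials_orbitClosure_iff] at hw ⊢
  obtain ⟨hlen, a, b, hab, ha, hb⟩ := hw
  have drop_append (c : C) : w.drop k ++ [c] = (w ++ [c]).drop k :=
    (List.drop_append_of_le_length (by lia)).symm
  refine ⟨by simp [hlen], a, b, hab, ?_, ?_⟩ <;> rw [drop_append]
  exacts [drop_mem_factors ha, drop_mem_factors hb]

theorem rightSpecials_subset_level :
    rightSpecials (orbitClosure x) n ⊆ level (factors x) n := by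
  intro w hw
  obtain ⟨hlen, a, -, -, ha, -⟩ := mem_rightSpecials_orbitClosure_iff.1 hw
  exact ⟨prefixClosed_factors x _ _ ha, hlen⟩

section FirstDifference

variable [Finite C]

theorem ncard_rightSpecials_le_factorComplexity :
    (rightSpecials (orbitClosure x) n).ncard ≤ factorComplexity x n := by
  rw [factorComplexity_eq_ncard_level]
  exact Set.ncard_le_ncard rightSpecials_subset_level (level_finite _ _)

theorem factorComplexity_add_ncard_rightSpecials_le :
    factorComplexity x n + (rightSpecials (orbitClosure x) n).ncard ≤
      factorComplexity x (n + 1) := by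
  classical
  have hfin := level_finite (factors x) n
  have children (w) (hw : w ∈ hfin.toFinset) :
      1 + (if w ∈ rightSpecials (orbitClosure x) n then 1 else 0) ≤
        {c | w ++ [c] ∈ factors x}.ncard := by
    obtain ⟨⟨p, hp⟩, -⟩ := hfin.mem_toFinset.1 hw
    split_ifs with hrs
    · obtain ⟨-, a, b, hab, ha, hb⟩ := mem_rightSpecials_orbitClosure_iff.1 hrs
      exact (Set.one_lt_ncard (Set.toFinite _)).2 ⟨a, ha, b, hb, hab⟩
    · exact (Set.ncard_pos (Set.toFinite _)).2
        ⟨x (p + w.length), append_singleton_mem_factorsAt_iff.2 ⟨p, hp, rfl⟩⟩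
  have card_rightSpecials : (rightSpecials (orbitClosure x) n).ncard =
      ∑ w ∈ hfin.toFinset, if w ∈ rightSpecials (orbitClosure x) n then 1 else 0 := by
    rw [Finset.sum_boole, Nat.cast_id, ← Set.ncard_coe_finset]
    congr 1
    ext w
    simpa using fun hw => rightSpecials_subset_level hw
  rw [factorComplexity_eq_ncard_level, factorComplexity_eq_ncard_level,
    ncard_level_succ (prefixClosed_factors x), card_rightSpecials,
    Set.ncard_eq_toFinset_card _ hfin, Finset.card_eq_sum_ones, ← Finset.sum_add_distrib]
  exact Finset.sum_le_sum children

theorem sum_ncard_rightSpecials_le :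
    ∑ i ∈ Finset.range n, (rightSpecials (orbitClosure x) i).ncard ≤ factorComplexity x n := by
  induction n with
  | zero => simp
  | succ n ih =>
    rw [Finset.sum_range_succ]
    exact (Nat.add_le_add_right ih _).trans factorComplexity_add_ncard_rightSpecials_le

theorem exists_mul_ncard_rightSpecials_le (hn : 0 < n) :
    ∃ i, m ≤ i ∧ i < m + n ∧
      n * (rightSpecials (orbitClosure x) i).ncard ≤ factorComplexity x (m + n) := by
  obtain ⟨i, hi, hmin⟩ := (Finset.Ico m (m + n)).exists_min_image
    (fun i => (rightSpecials (orbitClosure x) i).ncard) (Finset.nonempty_Ico.2 (by lia))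
  refine ⟨i, (Finset.mem_Ico.1 hi).1, (Finset.mem_Ico.1 hi).2, ?_⟩
  calc n * (rightSpecials (orbitClosure x) i).ncard
      ≤ ∑ j ∈ Finset.Ico m (m + n), (rightSpecials (orbitClosure x) j).ncard := by
        simpa using Finset.card_nsmul_le_sum _ _ _ hmin
    _ ≤ ∑ j ∈ Finset.range (m + n), (rightSpecials (orbitClosure x) j).ncard :=
        Finset.sum_le_sum_of_subset fun j hj => Finset.mem_range.2 (Finset.mem_Ico.1 hj).2
    _ ≤ factorComplexity x (m + n) := sum_ncard_rightSpecials_le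

end FirstDifference

/-- `g` is a positive period of the prefix of length `m` of `v`. It predicts `v (m - g)` as the next
letter. -/
def IsPeriod (v : ℕ → C) (m g : ℕ) : Prop :=
  0 < g ∧ ∀ i, i + g < m → v (i + g) = v i

theorem IsPeriod.apply_sub_eq {v : ℕ → C} {g g' : ℕ} (hg : IsPeriod v m g)
    (hg' : IsPeriod v m g') (hm : g + g' ≤ m) : v (m - g) = v (m - g') := by
  obtain ⟨hpos, hper⟩ := hg
  obtain ⟨hpos', hper'⟩ := hg'
  calc v (m - g) = v (m - g - g' + g') := by congr 1; lia
    _ = v (m - g - g') := hper' _ (by lia)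
    _ = v (m - g - g' + g) := (hper _ (by lia)).symm
    _ = v (m - g') := by congr 1; lia

theorem exists_forall_isPeriod_apply_sub_eq (v : ℕ → C) (hm : 2 * δ ≤ m) :
    ∃ a, ∀ g < δ, IsPeriod v m g → v (m - g) = a := by
  by_cases h : ∃ g < δ, IsPeriod v m g
  · obtain ⟨g, hgδ, hg⟩ := h
    exact ⟨v (m - g), fun g' hgδ' hg' => hg'.apply_sub_eq hg (by lia)⟩
  · exact ⟨v 0, fun g hgδ hg => (h ⟨g, hgδ, hg⟩).elim⟩

/-- The word `x` preceded by `δ` copies of its first letter (by truncated subtraction), so that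
windows may start up to `δ` letters before any position of `x`. -/
def delay (δ : ℕ) (x : ℕ → C) : ℕ → C :=
  fun i => x (i - δ)

theorem factorComplexity_delay_le [Finite C] :
    factorComplexity (delay δ x) n ≤ factorComplexity x n + δ := by
  have cover : level (factors (delay δ x)) n ⊆
      level (factors x) n ∪ (factor (delay δ x) · n) '' Set.Iio δ := by
    rw [factors, level_factorsAt, factors, level_factorsAt]
    rintro _ ⟨p, rfl⟩
    obtain hp | hp := lt_or_ge p δ
    · exact .inr ⟨p, hp, rfl⟩
    · refine .inl ⟨p - δ, factor_eq_factor_iff.2 fun i _ => congrArg x ?_⟩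
      simp only [id]
      lia
  have hfin := (level_finite (factors x) n).union ((Set.finite_Iio δ).image
    (factor (delay δ x) · n))
  rw [factorComplexity_eq_ncard_level, factorComplexity_eq_ncard_level]
  calc (level (factors (delay δ x)) n).ncard
      ≤ (level (factors x) n).ncard + ((factor (delay δ x) · n) '' Set.Iio δ).ncard :=
        (Set.ncard_le_ncard cover hfin).trans (Set.ncard_union_le _ _)
    _ ≤ (level (factors x) n).ncard + δ := by
        grw [Set.ncard_image_le (Set.finite_Iio δ)]
        simp

theorem injective_delay_window {p : κ → ℕ} {v : ℕ → C}
    (hinj : Function.Injective fun l => factor x (p l) (k + m))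
    (hv : ∀ l, ∀ i < m, x (p l + k + i) = v i) (hm : δ ≤ m)
    (hne : ∀ g < δ, IsPeriod v m g → ∀ l, x (p l + k + m) ≠ v (m - g)) :
    Function.Injective fun ls : κ × Fin δ =>
      factor (delay δ x) (p ls.1 + δ - ls.2) (k + m + δ) := by
  rintro ⟨l, s, hs⟩ ⟨l', s', hs'⟩ h
  wlog hss' : s ≤ s' generalizing l l' s s'
  · exact (this l' s' hs' l s hs h.symm (le_of_not_ge hss')).symm
  obtain ⟨g, rfl⟩ := Nat.exists_eq_add_of_le hss'
  have agree (i : ℕ) (hi : s + i < k + m + δ) (hgi : g ≤ i) : x (p l + i) = x (p l' + (i - g)) := by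
    have := factor_eq_factor_iff.1 h (s + i) hi
    simp only [delay] at this
    convert this using 2 <;> lia
  obtain rfl | hg := g.eq_zero_or_pos
  · have : l = l' := hinj <| factor_eq_factor_iff.2 fun i hi => agree i (by lia) (by lia)
    simp [this]
  have period (i) (hi : i + g < m) : v (i + g) = v i := by
    rw [← hv l _ hi, ← hv l' i (by lia)]
    convert agree (k + i + g) (by lia) (by lia) using 2 <;> lia
  refine (hne g (by lia) ⟨hg, period⟩ l ?_).elim
  rw [← hv l' (m - g) (by lia)]
  convert agree (k + m) (by lia) (by lia) using 2 <;> lia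

theorem ncard_rightSpecials_fiber_mul_le [Finite C] (hm : 2 * δ ≤ m) (q : ℕ) :
    {w ∈ rightSpecials (orbitClosure x) (k + m) | w.drop k = factor x q m}.ncard * δ ≤
      factorComplexity x (k + m + δ) + δ := by
  let F := {w ∈ rightSpecials (orbitClosure x) (k + m) | w.drop k = factor x q m}
  obtain ⟨a, ha⟩ := exists_forall_isPeriod_apply_sub_eq (fun i => x (q + i)) hm
  have occurs (w : F) : ∃ p, factor x p (k + m) = w ∧ x (p + (k + m)) ≠ a := by
    obtain ⟨hlen, b, b', hbb', hb, hb'⟩ := mem_rightSpecials_orbitClosure_iff.1 w.2.1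
    obtain ⟨p, hp, hpb⟩ := append_singleton_mem_factorsAt_iff.1 hb
    obtain ⟨p', hp', hpb'⟩ := append_singleton_mem_factorsAt_iff.1 hb'
    rw [hlen] at hp hpb hp' hpb'
    obtain hba | hba := eq_or_ne b a
    · exact ⟨p', hp', fun h => hbb' (hba.trans (h.symm.trans hpb'))⟩
    · exact ⟨p, hp, fun h => hba (hpb.symm.trans h)⟩
  choose p hp hpa using occurs
  have suffix_eq (w : F) : ∀ i < m, x (p w + k + i) = x (q + i) := by
    rw [← factor_eq_factor_iff, ← drop_factor, hp, w.2.2]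
  have window_injective := injective_delay_window (δ := δ)
    (fun w w' h => Subtype.ext (by simpa only [hp] using h)) suffix_eq (by lia)
    fun g hgδ hg w => by
      rw [ha g hgδ hg, add_assoc]
      exact hpa w
  have := (level_finite (factors (delay δ x)) (k + m + δ)).to_subtype
  calc F.ncard * δ = Nat.card (F × Fin δ) := by simp
    _ ≤ Nat.card (level (factors (delay δ x)) (k + m + δ)) :=
        Nat.card_le_card_of_injective
          (fun ws => ⟨_, factor_mem_factors, length_factor⟩) fun ws ws' h =>
            window_injective (congrArg Subtype.val h)
    _ = factorComplexity (delay δ x) (k + m + δ) := by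
        rw [factorComplexity_eq_ncard_level, Nat.card_coe_set_eq]
    _ ≤ factorComplexity x (k + m + δ) + δ := factorComplexity_delay_le

theorem ncard_rightSpecials_add_le [Finite C] {M : ℕ}
    (hM : ∀ q, {w ∈ rightSpecials (orbitClosure x) (k + m) | w.drop k = factor x q m}.ncard ≤ M) :
    (rightSpecials (orbitClosure x) (k + m)).ncard ≤
      M * (rightSpecials (orbitClosure x) m).ncard := by
  classical
  have hfin := rightSpecials_finite (orbitClosure x) (k + m)
  have hfin' := rightSpecials_finite (orbitClosure x) m
  rw [Set.ncard_eq_toFinset_card _ hfin, Set.ncard_eq_toFinset_card _ hfin']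
  refine Finset.card_le_mul_card_image_of_maps_to (f := List.drop k)
    (fun w hw => hfin'.mem_toFinset.2 (drop_mem_rightSpecials (hfin.mem_toFinset.1 hw))) M
    fun v hv => ?_
  obtain ⟨⟨q, hq⟩, hlen⟩ := rightSpecials_subset_level (hfin'.mem_toFinset.1 hv)
  refine le_trans (le_of_eq ?_) (hM q)
  rw [← Set.ncard_coe_finset]
  congr 1
  ext w
  rw [hlen] at hq
  simp [← hq]

theorem ncard_rightSpecials_le [Finite C] (hc : ∀ n, factorComplexity x n ≤ c * n + c) (n : ℕ) :
    (rightSpecials (orbitClosure x) n).ncard ≤ (9 * c + 1) * (5 * c) + 4 * c := by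
  obtain hn | hn := lt_or_ge n 4
  · have := ncard_rightSpecials_le_factorComplexity.trans (hc n)
    nlinarith
  let δ := n / 4
  have hδ : 0 < δ := by lia
  obtain ⟨m, hm, hmδ, hm_few⟩ :=
    exists_mul_ncard_rightSpecials_le (x := x) (m := 2 * δ) (n := 2 * δ) (by lia)
  obtain ⟨k, rfl⟩ : ∃ k, n = k + m := ⟨n - m, by lia⟩
  have few : (rightSpecials (orbitClosure x) m).ncard ≤ 5 * c := by
    refine Nat.le_of_mul_le_mul_right ?_ hδ
    calc _ ≤ 2 * δ * (rightSpecials (orbitClosure x) m).ncard := by nlinarith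
      _ ≤ c * (2 * δ + 2 * δ) + c := hm_few.trans (hc _)
      _ ≤ 5 * c * δ := by nlinarith
  have fiber (q : ℕ) :
      {w ∈ rightSpecials (orbitClosure x) (k + m) | w.drop k = factor x q m}.ncard ≤ 9 * c + 1 := by
    refine Nat.le_of_mul_le_mul_right ?_ hδ
    have hsum : k + m + δ + 1 ≤ 9 * δ := by lia
    calc _ ≤ factorComplexity x (k + m + δ) + δ := ncard_rightSpecials_fiber_mul_le hm q
      _ ≤ c * (k + m + δ + 1) + δ := by grw [hc, mul_add_one]
      _ ≤ c * (9 * δ) + δ := by grw [hsum]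
      _ = (9 * c + 1) * δ := by ring
  exact (ncard_rightSpecials_add_le fiber).trans
    ((Nat.mul_le_mul_left _ few).trans (Nat.le_add_right _ _))

end Cassaigne

theorem stmt0_general {A C : Type*} [Finite C] (S : ANS A) (hadd : S.Addable)
    (x : ℕ → C) (hx : SAutomatic S x)
    (hcomp : ∃ c : ℕ, ∀ n : ℕ, factorComplexity x n ≤ c * n + c) :
    SCodable S (winningShift (orbitClosure x)) :=
  have ⟨_, hc⟩ := hcomp
  ⟨weaklySCodable_winningShift_orbitClosure hadd hx,
    finiteCodingDim_winningShift (ncard_rightSpecials_le hc)⟩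

/-- If `S` is an addable ANS and `x` is an `S`-automatic word over a finite
alphabet with sublinear factor complexity, then the winning shift of the subshift generated
by `x` is `S`-codable. -/
theorem stmt0 {A C : Type} [Fintype A] [Fintype C] (S : ANS A) (hadd : S.Addable)
    (x : ℕ → C) (hx : SAutomatic S x)
    (hcomp : ∃ c : ℕ, ∀ n : ℕ, factorComplexity x n ≤ c * n + c) :
    SCodable S (winningShift (orbitClosure x)) :=
  stmt0_general S hadd x hx hcomp
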